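/- Fix ε > 0 and δ ∈ (0,1). Suppose there exists an optimal occupancy d*_0 (the occupancy of an unregularized optimal policy π*_0) satisfying d*_0(s,a)/d^D(s,a) ≤ B_{w,0} for all (s,a); let B_{f,0} bound |f| on [0,B_{w,0}]. Suppose assumptions (A1)–(A6) hold for α = α_ε := ε/(2B_{f,0}). Then there is a universal constant C1 > 0 such that if n ≥ C1·(ε·B_{f,α_ε} + 2·B_{w,α_ε}·B_{e,α_ε}·B_{f,0})²/(ε⁶·M_f²·(1−γ)⁴)·log(4|V||W|/δ) and n0 ≥ C1·(2·B_{v,α_ε}·B_{f,0})²/(ε⁶·M_f²·(1−γ)²)·log(4|V|/δ), then the output π̂ of PRO-RL with input α = α_ε satisfies J(π*_0) − J(π̂) ≤ ε with probability at least 1−δ. -/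

import Mathlib

open MeasureTheory
open scoped BigOperators ENNReal

namespace ProRL

/-- The discrete measure on a type induced by a real-valued weight function. -/
noncomputable def discMeasure {X : Type*} [MeasurableSpace X] (p : X → ℝ) : Measure X :=
  Measure.sum fun x => ENNReal.ofReal (p x) • Measure.dirac x

variable {S A : Type*} [Fintype S] [Fintype A]

/-- The `t`-step state-action distribution of policy `π` started from `μ0`. -/
noncomputable def saDist (P : S → A → S → ℝ) (μ0 : S → ℝ) (π : S → A → ℝ) :
    ℕ → S → A → ℝ
  | 0 => fun s a => μ0 s * π s a
  | t + 1 => fun s a =>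
      (∑ s' : S, ∑ a' : A, saDist P μ0 π t s' a' * P s' a' s) * π s a

/-- The discounted state-action occupancy `d^π(s,a)`. -/
noncomputable def occ (P : S → A → S → ℝ) (μ0 : S → ℝ) (γ : ℝ) (π : S → A → ℝ)
    (s : S) (a : A) : ℝ :=
  (1 - γ) * ∑' t : ℕ, γ ^ t * saDist P μ0 π t s a

/-- The (normalized) expected discounted return `J(π) = E_{d^π}[r]`. -/
noncomputable def Jret (P : S → A → S → ℝ) (r : S → A → ℝ) (μ0 : S → ℝ) (γ : ℝ)
    (π : S → A → ℝ) : ℝ :=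
  ∑ s : S, ∑ a : A, occ P μ0 γ π s a * r s a

/-- `π` is a (stationary, stochastic) policy. -/
def IsPolicy (π : S → A → ℝ) : Prop :=
  (∀ s a, 0 ≤ π s a) ∧ ∀ s, ∑ a : A, π s a = 1

/-- The Bellman residual `e_v(s,a) = r(s,a) + γ ∑_{s'} P(s'|s,a) v(s') − v(s)`. -/
noncomputable def eV (P : S → A → S → ℝ) (r : S → A → ℝ) (γ : ℝ) (v : S → ℝ)
    (s : S) (a : A) : ℝ :=
  r s a + γ * ∑ s' : S, P s a s' * v s' - v s

/-- The population Lagrangian `L_α(v,w)`. -/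
noncomputable def Lag (P : S → A → S → ℝ) (r : S → A → ℝ) (μ0 : S → ℝ) (γ : ℝ)
    (dD : S → A → ℝ) (f : ℝ → ℝ) (α : ℝ) (v : S → ℝ) (w : S → A → ℝ) : ℝ :=
  (1 - γ) * ∑ s : S, μ0 s * v s
    - α * ∑ s : S, ∑ a : A, dD s a * f (w s a)
    + ∑ s : S, ∑ a : A, dD s a * (w s a * eV P r γ v s a)

/-- The empirical Lagrangian `L̂_α(v,w)` built from the transition dataset `D`
(`D i = ((sᵢ,aᵢ), s'ᵢ)`, with `rᵢ = r sᵢ aᵢ`) and initial-state dataset `D0`. -/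
noncomputable def empLag (r : S → A → ℝ) (γ : ℝ) (f : ℝ → ℝ) (α : ℝ) {n n0 : ℕ}
    (D : Fin n → (S × A) × S) (D0 : Fin n0 → S) (v : S → ℝ) (w : S → A → ℝ) : ℝ :=
  (1 - γ) * ((n0 : ℝ)⁻¹ * ∑ j : Fin n0, v (D0 j))
    - α * ((n : ℝ)⁻¹ * ∑ i : Fin n, f (w (D i).1.1 (D i).1.2))
    + (n : ℝ)⁻¹ * ∑ i : Fin n,
        w (D i).1.1 (D i).1.2 *
          (r (D i).1.1 (D i).1.2 + γ * v (D i).2 - v (D i).1.1)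

/-- Per-state normalization of a state-action weight into a policy
(uniform where the state marginal is not positive). -/
noncomputable def normPolicy (d : S → A → ℝ) (s : S) (a : A) : ℝ :=
  if 0 < ∑ a' : A, d s a' then d s a / ∑ a' : A, d s a'
  else (Fintype.card A : ℝ)⁻¹

/-- Policy extraction from a density ratio `w` and a behavior policy `piD`
(uniform where the normalizer vanishes). -/
noncomputable def extractPolicy (piD w : S → A → ℝ) (s : S) (a : A) : ℝ :=
  if 0 < ∑ a' : A, w s a' * piD s a' then
    w s a * piD s a / ∑ a' : A, w s a' * piD s a'
  else (Fintype.card A : ℝ)⁻¹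

/-- Behavior policy `π_D(a|s)` obtained from the data distribution `d^D`. -/
noncomputable def behPolicy (dD : S → A → ℝ) : S → A → ℝ := normPolicy dD

/-- The state-action measure `d(s,a) = w(s,a)·d^D(s,a)`. -/
noncomputable def dstar (dD w : S → A → ℝ) : S → A → ℝ := fun s a => w s a * dD s a

/-- The weighted `L²(d^D)` norm of a state-action function. -/
noncomputable def l2nrm (dD g : S → A → ℝ) : ℝ :=
  Real.sqrt (∑ s : S, ∑ a : A, dD s a * g s a ^ 2)

/-- `‖π(·|s) − π'(·|s)‖₁`. -/
noncomputable def l1Pol (π π' : S → A → ℝ) (s : S) : ℝ := ∑ a : A, |π s a - π' s a|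

/-- `E_{s ∼ d}[‖π(·|s) − π'(·|s)‖₁]` where `d` is a state-action distribution. -/
noncomputable def expL1 (d π π' : S → A → ℝ) : ℝ :=
  ∑ s : S, (∑ a : A, d s a) * l1Pol π π' s

/-- The statistical error term `ε_stat`. -/
noncomputable def epsStat (γ α Bv Bf Bw Be δ : ℝ) (nV nW n n0 : ℕ) : ℝ :=
  (1 - γ) * Bv * Real.sqrt (2 * Real.log (4 * (nV : ℝ) / δ) / (n0 : ℝ))
    + (α * Bf + Bw * Be) *
        Real.sqrt (2 * Real.log (4 * ((nV : ℝ) * (nW : ℝ)) / δ) / (n : ℝ))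

/-- The Bellman flow equations for a state-action measure `d`. -/
def BellmanFlow (P : S → A → S → ℝ) (μ0 : S → ℝ) (γ : ℝ) (d : S → A → ℝ) : Prop :=
  ∀ s : S, ∑ a : A, d s a
    = (1 - γ) * μ0 s + γ * ∑ s' : S, ∑ a' : A, P s' a' s * d s' a'

/-- `(v,w)` is a saddle point of `max_{w ≥ 0} min_v L_α(v,w)`. -/
def IsSaddle (P : S → A → S → ℝ) (r : S → A → ℝ) (μ0 : S → ℝ) (γ : ℝ)
    (dD : S → A → ℝ) (f : ℝ → ℝ) (α : ℝ) (v : S → ℝ) (w : S → A → ℝ) : Prop :=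
  (∀ s a, 0 ≤ w s a) ∧
  (∀ v' : S → ℝ, Lag P r μ0 γ dD f α v w ≤ Lag P r μ0 γ dD f α v' w) ∧
  (∀ w' : S → A → ℝ, (∀ s a, 0 ≤ w' s a) →
    Lag P r μ0 γ dD f α v w' ≤ Lag P r μ0 γ dD f α v w)

/-- `(v,w)` is a saddle point of `max_{0 ≤ w ≤ Bw} min_v L_α(v,w)` (constrained LP). -/
def IsSaddleB (P : S → A → S → ℝ) (r : S → A → ℝ) (μ0 : S → ℝ) (γ : ℝ)
    (dD : S → A → ℝ) (f : ℝ → ℝ) (α Bw : ℝ) (v : S → ℝ) (w : S → A → ℝ) : Prop :=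
  (∀ s a, 0 ≤ w s a ∧ w s a ≤ Bw) ∧
  (∀ v' : S → ℝ, Lag P r μ0 γ dD f α v w ≤ Lag P r μ0 γ dD f α v' w) ∧
  (∀ w' : S → A → ℝ, (∀ s a, 0 ≤ w' s a ∧ w' s a ≤ Bw) →
    Lag P r μ0 γ dD f α v w' ≤ Lag P r μ0 γ dD f α v w)

/-- `(vhat, what)` is an exact max-min point of the empirical Lagrangian over `V × W`:
`vhat ∈ argmin_{v ∈ V} L̂(v, what)` and `what ∈ argmax_{w ∈ W} min_{v ∈ V} L̂(v, w)`. -/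
def IsProRLOutput (r : S → A → ℝ) (γ : ℝ) (f : ℝ → ℝ) (α : ℝ)
    (V : Finset (S → ℝ)) (W : Finset (S → A → ℝ)) {n n0 : ℕ}
    (D : Fin n → (S × A) × S) (D0 : Fin n0 → S)
    (vhat : S → ℝ) (what : S → A → ℝ) : Prop :=
  vhat ∈ V ∧ what ∈ W ∧
  (∀ v ∈ V, empLag r γ f α D D0 vhat what ≤ empLag r γ f α D D0 v what) ∧
  ∀ w ∈ W, ∀ vw ∈ V,
    (∀ v ∈ V, empLag r γ f α D D0 vw w ≤ empLag r γ f α D D0 v w) →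
      empLag r γ f α D D0 vw w ≤ empLag r γ f α D D0 vhat what

/-- Weight of a transition tuple `((s,a),s')` under `(s,a) ∼ d^D`, `s' ∼ P(·|s,a)`. -/
noncomputable def tupleWeight (P : S → A → S → ℝ) (dD : S → A → ℝ)
    (x : (S × A) × S) : ℝ :=
  dD x.1.1 x.1.2 * P x.1.1 x.1.2 x.2

/-- The joint law of the transition dataset `D` (i.i.d. from `d^D ⊗ P`) and the
initial-state dataset `D0` (i.i.d. from `μ0`). -/
noncomputable def dataMeasure [MeasurableSpace S] [MeasurableSpace A]
    (P : S → A → S → ℝ) (dD : S → A → ℝ) (μ0 : S → ℝ) (n n0 : ℕ) :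
    Measure ((Fin n → (S × A) × S) × (Fin n0 → S)) :=
  (Measure.pi fun _ : Fin n => discMeasure (tupleWeight P dD)).prod
    (Measure.pi fun _ : Fin n0 => discMeasure μ0)

/-- The joint law of datasets `D1`, `D2` (both i.i.d. from `d^D ⊗ P`) and `D0`
(i.i.d. from `μ0`), used by PRO-RL-BC. -/
noncomputable def dataMeasure3 [MeasurableSpace S] [MeasurableSpace A]
    (P : S → A → S → ℝ) (dD : S → A → ℝ) (μ0 : S → ℝ) (n1 n2 n0 : ℕ) :
    Measure ((Fin n1 → (S × A) × S) × (Fin n2 → (S × A) × S) × (Fin n0 → S)) :=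
  (Measure.pi fun _ : Fin n1 => discMeasure (tupleWeight P dD)).prod
    ((Measure.pi fun _ : Fin n2 => discMeasure (tupleWeight P dD)).prod
      (Measure.pi fun _ : Fin n0 => discMeasure μ0))

/-- `v` is the optimal value function: it satisfies the Bellman optimality equation. -/
def IsOptValue [Nonempty A] (P : S → A → S → ℝ) (r : S → A → ℝ) (γ : ℝ)
    (v : S → ℝ) : Prop :=
  ∀ s : S, v s = Finset.univ.sup' Finset.univ_nonempty
    (fun a : A => r s a + γ * ∑ s' : S, P s a s' * v s')

/-- Basic assumptions on the MDP, the regularizer-free data, and the data distribution. -/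
structure MDPAssumptions (P : S → A → S → ℝ) (r : S → A → ℝ) (μ0 : S → ℝ) (γ : ℝ)
    (dD : S → A → ℝ) : Prop where
  P_nonneg : ∀ s a s', 0 ≤ P s a s'
  P_sum : ∀ s a, ∑ s' : S, P s a s' = 1
  r_nonneg : ∀ s a, 0 ≤ r s a
  r_le_one : ∀ s a, r s a ≤ 1
  γ_nonneg : 0 ≤ γ
  γ_lt_one : γ < 1
  μ0_pos : ∀ s, 0 < μ0 s
  μ0_sum : ∑ s : S, μ0 s = 1
  dD_nonneg : ∀ s a, 0 ≤ dD s a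
  dD_sum : ∑ s : S, ∑ a : A, dD s a = 1

/-- Regularity of the regularizer `f`: continuously differentiable with derivative `f'`,
`M_f`-strongly convex, and with `|f'| ≤ Bf'`, `|f| ≤ Bf` on `[0, Bw]`. -/
structure RegAssumptions (f f' : ℝ → ℝ) (Mf Bw Bf' Bf : ℝ) : Prop where
  deriv : ∀ x, HasDerivAt f (f' x) x
  strong : StrongConvexOn Set.univ Mf f
  Mf_pos : 0 < Mf
  f'_bdd : ∀ x, 0 ≤ x → x ≤ Bw → |f' x| ≤ Bf'
  f_bdd : ∀ x, 0 ≤ x → x ≤ Bw → |f x| ≤ Bf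

/-- `w` is an optimal density ratio of the unregularized LP (the set `W*₀`). -/
def OptRatio (P : S → A → S → ℝ) (r : S → A → ℝ) (μ0 : S → ℝ) (γ : ℝ)
    (dD : S → A → ℝ) (w : S → A → ℝ) : Prop :=
  (∀ s a, 0 ≤ w s a) ∧ BellmanFlow P μ0 γ (dstar dD w) ∧
  ∀ w' : S → A → ℝ, (∀ s a, 0 ≤ w' s a) → BellmanFlow P μ0 γ (dstar dD w') →
    ∑ s : S, ∑ a : A, dstar dD w' s a * r s a
      ≤ ∑ s : S, ∑ a : A, dstar dD w s a * r s a

/-!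
The Lagrangian is affine in `v`, and its gradient is the residual of the Bellman flow equation of
`w·dD`; hence `d* = w*·dD` at a saddle point `(v*, w*)` satisfies that equation, and comparing `w*`
with the density ratio of the covered policy `π0` shows that regularization costs a return of at
most `α B_{f,0} = ε/2`.

In `w` the Lagrangian is strongly concave for the `L²(dD)` norm. If `L̂` is uniformly within `η` of
`L`, then the max-min property of `ŵ` gives `L(v*, w*) − L(v*, ŵ) ≤ 2η`, so that `ŵ·dD` is within
`2 √(2η / (α M_f))` of `d*` in `ℓ¹`. The extracted policy `π̂` is a version of the conditionals of
`ŵ·dD`, so replacing the conditionals of `d*` by `π̂` moves `d*` by at most twice that distance. Two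
solutions of the flow equation differ in their state marginals by at most `γ` times their distance,
so the occupancy of `π̂` is at most a factor `1 / (1 − γ)` further from `d*`. Hoeffding's inequality
and a union bound over `V × W` provide `η`.
-/

/-! ### Hoeffding's inequality for finite classes of functions -/

section Concentration

open ProbabilityTheory

lemma measureReal_le_abs_le_of_hasSubgaussianMGF {Ω : Type*} [MeasurableSpace Ω] {μ : Measure Ω}
    {Y : Ω → ℝ} {c : NNReal} (hY : HasSubgaussianMGF Y c μ) {t : ℝ} (ht : 0 ≤ t) :
    μ.real {ω | t ≤ |Y ω|} ≤ 2 * Real.exp (-t ^ 2 / (2 * c)) := by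
  have hunion : {ω | t ≤ |Y ω|} = {ω | t ≤ Y ω} ∪ {ω | t ≤ (-Y) ω} := by
    ext ω
    exact le_abs (a := t) (b := Y ω)
  rw [hunion, two_mul]
  exact (measureReal_union_le _ _).trans
    (add_le_add (hY.measure_ge_le ht) (hY.neg.measure_ge_le ht))

lemma two_mul_exp_neg_hoeffding_le {n B δ : ℝ} (hn : 0 < n) (hB : 0 < B) (hδ : 0 < δ) :
    2 * Real.exp (-(n * (B * √(2 * Real.log (2 / δ) / n))) ^ 2 / (2 * (n * B ^ 2))) ≤ δ := by
  set L := Real.log (2 / δ)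
  have hsq : 2 * L / n ≤ √(2 * L / n) ^ 2 := (le_max_left _ _).trans_eq Real.sq_sqrt'.symm
  have hexponent : -(n * (B * √(2 * L / n))) ^ 2 / (2 * (n * B ^ 2)) ≤ -L :=
    calc -(n * (B * √(2 * L / n))) ^ 2 / (2 * (n * B ^ 2))
        = -(n / 2) * √(2 * L / n) ^ 2 := by field_simp
      _ ≤ -(n / 2) * (2 * L / n) := mul_le_mul_of_nonpos_left hsq (by linarith)
      _ = -L := by field_simp
  calc 2 * Real.exp (-(n * (B * √(2 * L / n))) ^ 2 / (2 * (n * B ^ 2)))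
      ≤ 2 * Real.exp (-L) := by gcongr
    _ = δ := by rw [Real.exp_neg, Real.exp_log (by positivity)]; field_simp

variable {ι X : Type*} [Fintype ι] [MeasurableSpace X] {μ : Measure X} [IsProbabilityMeasure μ]

lemma hasSubgaussianMGF_pi_sum_sub_integral {g : X → ℝ} (hg : Measurable g) {B : ℝ}
    (hgB : ∀ x, |g x| ≤ B) :
    HasSubgaussianMGF (fun x : ι → X => ∑ i, (g (x i) - ∫ y, g y ∂μ))
      (Fintype.card ι * ‖B‖₊ ^ 2) (Measure.pi fun _ : ι => μ) := by
  have hcoord : HasSubgaussianMGF (fun y => g y - ∫ y, g y ∂μ) (‖B‖₊ ^ 2) μ := by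
    have h := hasSubgaussianMGF_of_mem_Icc hg.aemeasurable
      (ae_of_all μ fun y => abs_le.mp (hgB y))
    rwa [sub_neg_eq_add, ← two_mul, nnnorm_mul, Real.nnnorm_two,
      mul_div_cancel_left₀ _ two_ne_zero] at h
  have hindep : iIndepFun (fun (i : ι) (x : ι → X) => g (x i) - ∫ y, g y ∂μ)
      (Measure.pi fun _ : ι => μ) :=
    iIndepFun_pi fun _ => (hg.sub_const _).aemeasurable
  have hsum := HasSubgaussianMGF.sum_of_iIndepFun (s := Finset.univ) hindep
    (c := fun _ => ‖B‖₊ ^ 2) fun i _ => by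
      have hpres := measurePreserving_eval (fun _ : ι => μ) i
      exact .of_map hpres.measurable.aemeasurable (by rwa [hpres.map_eq])
  simpa only [Finset.sum_const, Finset.card_univ, nsmul_eq_mul] using hsum

variable [Nonempty ι]

lemma measure_pi_lt_abs_mean_sub_integral_le {g : X → ℝ} (hg : Measurable g) {B : ℝ}
    (hgB : ∀ x, |g x| ≤ B) {δ : ℝ} (hδ : 0 < δ) :
    Measure.pi (fun _ : ι => μ)
        {x | B * √(2 * Real.log (2 / δ) / Fintype.card ι)
          < |(Fintype.card ι : ℝ)⁻¹ * ∑ i, g (x i) - ∫ y, g y ∂μ|}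
      ≤ ENNReal.ofReal δ := by
  have hn : (0 : ℝ) < Fintype.card ι := by exact_mod_cast Fintype.card_pos
  have hB : 0 ≤ B := by
    obtain ⟨x⟩ := nonempty_of_isProbabilityMeasure μ
    exact (abs_nonneg _).trans (hgB x)
  set n := (Fintype.card ι : ℝ)
  rcases hB.eq_or_lt with rfl | hB
  · have hg0 : ∀ x, g x = 0 := fun x => abs_nonpos_iff.mp (hgB x)
    simp [hg0]
  set t := B * √(2 * Real.log (2 / δ) / n)
  have hsub : {x : ι → X | t < |n⁻¹ * ∑ i, g (x i) - ∫ y, g y ∂μ|}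
      ⊆ {x | n * t ≤ |∑ i, (g (x i) - ∫ y, g y ∂μ)|} := by
    intro x hx
    have hscale : ∑ i, (g (x i) - ∫ y, g y ∂μ) = n * (n⁻¹ * ∑ i, g (x i) - ∫ y, g y ∂μ) := by
      rw [Finset.sum_sub_distrib, Finset.sum_const, Finset.card_univ, nsmul_eq_mul, mul_sub,
        mul_inv_cancel_left₀ hn.ne']
    rw [Set.mem_ofPred_eq, hscale, abs_mul, abs_of_pos hn]
    exact mul_le_mul_of_nonneg_left (le_of_lt hx) hn.le
  have htail := measureReal_le_abs_le_of_hasSubgaussianMGF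
    (hasSubgaussianMGF_pi_sum_sub_integral (ι := ι) (μ := μ) hg hgB) (t := n * t) (by positivity)
  rw [NNReal.coe_mul, NNReal.coe_pow, NNReal.coe_natCast, coe_nnnorm, Real.norm_eq_abs,
    sq_abs] at htail
  rw [← ofReal_measureReal]
  exact ENNReal.ofReal_le_ofReal <| (measureReal_mono hsub).trans <| htail.trans <|
    two_mul_exp_neg_hoeffding_le hn hB hδ

lemma measure_pi_exists_lt_abs_mean_sub_integral_le {κ : Type*} {s : Finset κ} {g : κ → X → ℝ}
    (hg : ∀ k ∈ s, Measurable (g k)) {B : ℝ} (hgB : ∀ k ∈ s, ∀ x, |g k x| ≤ B) {δ : ℝ}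
    (hδ : 0 < δ) :
    Measure.pi (fun _ : ι => μ)
        {x | ∃ k ∈ s, B * √(2 * Real.log (2 * s.card / δ) / Fintype.card ι)
          < |(Fintype.card ι : ℝ)⁻¹ * ∑ i, g k (x i) - ∫ y, g k y ∂μ|}
      ≤ ENNReal.ofReal δ := by
  simp only [← exists_prop, Set.ofPred_exists]
  calc _ ≤ ∑ k ∈ s, Measure.pi (fun _ : ι => μ)
          {x | B * √(2 * Real.log (2 * s.card / δ) / Fintype.card ι)
            < |(Fintype.card ι : ℝ)⁻¹ * ∑ i, g k (x i) - ∫ y, g k y ∂μ|} :=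
        measure_biUnion_finset_le _ _
    _ ≤ ∑ _k ∈ s, ENNReal.ofReal δ / s.card := by
        refine Finset.sum_le_sum fun k hk => ?_
        have hs : (0 : ℝ) < s.card := by exact_mod_cast Finset.card_pos.mpr ⟨k, hk⟩
        have h := measure_pi_lt_abs_mean_sub_integral_le (ι := ι) (μ := μ) (hg k hk) (hgB k hk)
          (div_pos hδ hs)
        rwa [div_div_eq_mul_div, ENNReal.ofReal_div_of_pos hs, ENNReal.ofReal_natCast] at h
    _ ≤ ENNReal.ofReal δ := by
        rw [Finset.sum_const, nsmul_eq_mul]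
        exact ENNReal.mul_div_le

end Concentration

/-! ### The sampling model -/

section Sampling

section Discrete

variable {X : Type*} [Fintype X] [MeasurableSpace X] {p : X → ℝ}

lemma isProbabilityMeasure_discMeasure (hp : p ∈ stdSimplex ℝ X) :
    IsProbabilityMeasure (discMeasure p) := by
  constructor
  rw [discMeasure, Measure.sum_apply _ MeasurableSet.univ, tsum_fintype]
  simp only [Measure.smul_apply, measure_univ, smul_eq_mul, mul_one]
  rw [← ENNReal.ofReal_sum_of_nonneg fun x _ => hp.1 x, hp.2, ENNReal.ofReal_one]

lemma integral_discMeasure [MeasurableSingletonClass X] (hp : ∀ x, 0 ≤ p x) (g : X → ℝ) :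
    ∫ x, g x ∂discMeasure p = ∑ x, p x * g x := by
  have hint : ∀ x, Integrable g (ENNReal.ofReal (p x) • Measure.dirac x) := fun x =>
    (integrable_dirac (enorm_lt_top)).smul_measure ENNReal.ofReal_ne_top
  rw [discMeasure, Measure.sum_fintype, integral_finsetSum_measure fun x _ => hint x]
  simp only [integral_smul_measure, integral_dirac, ENNReal.toReal_ofReal (hp _), smul_eq_mul]

end Discrete

variable {P : S → A → S → ℝ} {dD : S → A → ℝ}

lemma tupleWeight_mem_stdSimplex (hP : ∀ s a, P s a ∈ stdSimplex ℝ S)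
    (hdD : Function.uncurry dD ∈ stdSimplex ℝ (S × A)) :
    tupleWeight P dD ∈ stdSimplex ℝ ((S × A) × S) := by
  refine ⟨fun x => mul_nonneg (hdD.1 x.1) ((hP _ _).1 _), ?_⟩
  simp only [tupleWeight, Fintype.sum_prod_type, ← Finset.mul_sum, (hP _ _).2, mul_one]
  exact (Fintype.sum_prod_type' dD).symm.trans hdD.2

lemma isProbabilityMeasure_dataMeasure [MeasurableSpace S] [MeasurableSpace A] {μ0 : S → ℝ}
    (hP : ∀ s a, P s a ∈ stdSimplex ℝ S) (hμ0 : μ0 ∈ stdSimplex ℝ S)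
    (hdD : Function.uncurry dD ∈ stdSimplex ℝ (S × A)) (n n0 : ℕ) :
    IsProbabilityMeasure (dataMeasure P dD μ0 n n0) := by
  have := isProbabilityMeasure_discMeasure (tupleWeight_mem_stdSimplex hP hdD)
  have := isProbabilityMeasure_discMeasure hμ0
  unfold dataMeasure
  infer_instance

end Sampling

/-! ### State-action measures with prescribed conditionals -/

section Conditionals

/-- The marginal `d(s) = ∑ₐ d(s,a)` on states of a state-action measure `d`. -/
def stateMarginal (d : S → A → ℝ) (s : S) : ℝ := ∑ a : A, d s a

/-- The state-action measure with the same state marginal as `d` and with conditionals `π`; thus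
`withPolicy d π = d` says that `π` is a version of the conditionals of `d`, which leaves `π` free at
the states that `d` does not visit. -/
def withPolicy (d π : S → A → ℝ) (s : S) (a : A) : ℝ := stateMarginal d s * π s a

/-- The distance `‖d − d'‖₁` (twice the total variation distance) of two state-action measures. -/
def l1Dist (d d' : S → A → ℝ) : ℝ := ∑ s : S, ∑ a : A, |d s a - d' s a|

variable {d d' π : S → A → ℝ}

lemma l1Dist_comm (d d' : S → A → ℝ) : l1Dist d d' = l1Dist d' d := by
  simp only [l1Dist, abs_sub_comm]

lemma l1Dist_triangle (d₁ d₂ d₃ : S → A → ℝ) : l1Dist d₁ d₃ ≤ l1Dist d₁ d₂ + l1Dist d₂ d₃ := by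
  simp only [l1Dist, ← Finset.sum_add_distrib]
  gcongr
  exact abs_sub_le _ _ _

lemma sum_mul_sub_sum_mul_le_l1Dist {r : S → A → ℝ} (hr : ∀ s a, r s a ∈ Set.Icc 0 1)
    (d d' : S → A → ℝ) :
    ∑ s, ∑ a, d s a * r s a - ∑ s, ∑ a, d' s a * r s a ≤ l1Dist d d' := by
  simp only [← Finset.sum_sub_distrib, l1Dist, ← sub_mul]
  gcongr with s _ a
  calc (d s a - d' s a) * r s a ≤ |d s a - d' s a| * r s a :=
        mul_le_mul_of_nonneg_right (le_abs_self _) (hr s a).1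
    _ ≤ |d s a - d' s a| := mul_le_of_le_one_right (abs_nonneg _) (hr s a).2

lemma sum_abs_stateMarginal_sub_le_l1Dist (d d' : S → A → ℝ) :
    ∑ s, |stateMarginal d s - stateMarginal d' s| ≤ l1Dist d d' := by
  simp only [stateMarginal, l1Dist, ← Finset.sum_sub_distrib]
  gcongr
  exact Finset.abs_sum_le_sum_abs _ _

lemma l1Dist_withPolicy (hπ : IsPolicy π) (d d' : S → A → ℝ) :
    l1Dist (withPolicy d π) (withPolicy d' π)
      = ∑ s, |stateMarginal d s - stateMarginal d' s| := by
  refine Finset.sum_congr rfl fun s _ => ?_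
  simp only [withPolicy, ← sub_mul, abs_mul, abs_of_nonneg (hπ.1 s _), ← Finset.mul_sum, hπ.2 s,
    mul_one]

lemma l1Dist_withPolicy_self_le (hπ : IsPolicy π) (hd' : withPolicy d' π = d') :
    l1Dist d (withPolicy d π) ≤ 2 * l1Dist d d' :=
  calc l1Dist d (withPolicy d π)
      ≤ l1Dist d d' + l1Dist (withPolicy d' π) (withPolicy d π) := by
        simpa only [hd'] using l1Dist_triangle d d' (withPolicy d π)
    _ ≤ l1Dist d d' + l1Dist d' d := by
        rw [l1Dist_withPolicy hπ]
        gcongr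
        exact sum_abs_stateMarginal_sub_le_l1Dist d' d
    _ = 2 * l1Dist d d' := by rw [l1Dist_comm d' d, two_mul]

section BellmanFlow

variable {P : S → A → S → ℝ} {μ0 : S → ℝ} {γ : ℝ}

lemma BellmanFlow.sum_abs_stateMarginal_sub_le (hP : ∀ s a, P s a ∈ stdSimplex ℝ S) (hγ : 0 ≤ γ)
    (hd : BellmanFlow P μ0 γ d) (hd' : BellmanFlow P μ0 γ d') :
    ∑ s, |stateMarginal d s - stateMarginal d' s| ≤ γ * l1Dist d d' :=
  calc ∑ s, |stateMarginal d s - stateMarginal d' s|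
      = ∑ s, γ * |∑ s', ∑ a', P s' a' s * (d s' a' - d' s' a')| := by
        refine Finset.sum_congr rfl fun s _ => ?_
        simp only [mul_sub, Finset.sum_sub_distrib]
        rw [stateMarginal, stateMarginal, hd s, hd' s, add_sub_add_left_eq_sub, ← mul_sub, abs_mul,
          abs_of_nonneg hγ]
    _ ≤ ∑ s, γ * ∑ s', ∑ a', P s' a' s * |d s' a' - d' s' a'| := by
        gcongr with s
        refine (Finset.abs_sum_le_sum_abs _ _).trans ?_
        gcongr with s' _
        refine (Finset.abs_sum_le_sum_abs _ _).trans_eq ?_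
        simp only [abs_mul, abs_of_nonneg ((hP _ _).1 _)]
    _ = γ * l1Dist d d' := by
        rw [← Finset.mul_sum, Finset.sum_comm, l1Dist]
        congr 1
        refine Finset.sum_congr rfl fun s' _ => ?_
        rw [Finset.sum_comm]
        simp only [← Finset.sum_mul, (hP _ _).2, one_mul]

lemma BellmanFlow.l1Dist_le (hP : ∀ s a, P s a ∈ stdSimplex ℝ S) (hγ : 0 ≤ γ)
    (hd : BellmanFlow P μ0 γ d) (hd' : BellmanFlow P μ0 γ d') (hπ : IsPolicy π)
    (hπd' : withPolicy d' π = d') :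
    (1 - γ) * l1Dist d d' ≤ l1Dist d (withPolicy d π) := by
  have htri : l1Dist d d' ≤ l1Dist d (withPolicy d π) + γ * l1Dist d d' :=
    calc l1Dist d d'
        ≤ l1Dist d (withPolicy d π) + l1Dist (withPolicy d π) (withPolicy d' π) := by
          simpa only [hπd'] using l1Dist_triangle d (withPolicy d π) d'
      _ ≤ l1Dist d (withPolicy d π) + γ * l1Dist d d' := by
          rw [l1Dist_withPolicy hπ]
          gcongr
          exact hd.sum_abs_stateMarginal_sub_le hP hγ hd'
  linarith

end BellmanFlow

section Extraction

variable {dD w : S → A → ℝ}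

omit [Fintype S] in
lemma normPolicy_nonneg (hd : ∀ s a, 0 ≤ d s a) (s : S) (a : A) : 0 ≤ normPolicy d s a := by
  rw [normPolicy]
  split_ifs with h
  · exact div_nonneg (hd s a) h.le
  · positivity

omit [Fintype S] in
lemma isPolicy_normPolicy [Nonempty A] (hd : ∀ s a, 0 ≤ d s a) : IsPolicy (normPolicy d) := by
  refine ⟨normPolicy_nonneg hd, fun s => ?_⟩
  simp only [normPolicy]
  split_ifs with h
  · rw [← Finset.sum_div, div_self h.ne']
  · simp

omit [Fintype S] in
lemma withPolicy_normPolicy (hd : ∀ s a, 0 ≤ d s a) : withPolicy d (normPolicy d) = d := by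
  funext s a
  rw [withPolicy, stateMarginal, normPolicy]
  split_ifs with h
  · exact mul_div_cancel₀ _ h.ne'
  · have hsum : ∑ a', d s a' = 0 :=
      le_antisymm (not_lt.mp h) (Finset.sum_nonneg fun a' _ => hd s a')
    rw [hsum, zero_mul, (Finset.sum_eq_zero_iff_of_nonneg fun a' _ => hd s a').mp hsum a
      (Finset.mem_univ a)]

omit [Fintype S] in
lemma extractPolicy_eq_normPolicy (piD w : S → A → ℝ) :
    extractPolicy piD w = normPolicy (dstar piD w) := rfl

omit [Fintype S] [Fintype A] in
lemma dstar_nonneg (hdD : ∀ s a, 0 ≤ dD s a) (hw : ∀ s a, 0 ≤ w s a) (s : S) (a : A) :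
    0 ≤ dstar dD w s a :=
  mul_nonneg (hw s a) (hdD s a)

omit [Fintype S] in
lemma isPolicy_extractPolicy_behPolicy [Nonempty A] (hdD : ∀ s a, 0 ≤ dD s a)
    (hw : ∀ s a, 0 ≤ w s a) : IsPolicy (extractPolicy (behPolicy dD) w) :=
  isPolicy_normPolicy (dstar_nonneg (normPolicy_nonneg hdD) hw)

omit [Fintype S] in
lemma withPolicy_extractPolicy_behPolicy (hdD : ∀ s a, 0 ≤ dD s a) (hw : ∀ s a, 0 ≤ w s a) :
    withPolicy (dstar dD w) (extractPolicy (behPolicy dD) w) = dstar dD w := by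
  have hpiD : ∀ s a, 0 ≤ behPolicy dD s a := normPolicy_nonneg hdD
  have hfactor : ∀ s a, dstar dD w s a = stateMarginal dD s * dstar (behPolicy dD) w s a :=
    fun s a => by
      have h : stateMarginal dD s * behPolicy dD s a = dD s a :=
        congr_fun₂ (withPolicy_normPolicy hdD) s a
      rw [dstar, dstar, ← h, mul_left_comm]
  funext s a
  calc withPolicy (dstar dD w) (extractPolicy (behPolicy dD) w) s a
      = stateMarginal dD s
          * withPolicy (dstar (behPolicy dD) w) (normPolicy (dstar (behPolicy dD) w)) s a := by
        simp only [withPolicy, stateMarginal, hfactor, ← Finset.mul_sum, mul_assoc,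
          extractPolicy_eq_normPolicy]
    _ = dstar dD w s a := by
        rw [withPolicy_normPolicy (dstar_nonneg hpiD hw), hfactor]

end Extraction

end Conditionals

/-! ### Occupancies -/

section Occupancy

variable {P : S → A → S → ℝ} {μ0 : S → ℝ} {γ : ℝ} {π : S → A → ℝ}

lemma stateMarginal_saDist_zero (P : S → A → S → ℝ) (μ0 : S → ℝ) (hπ : IsPolicy π) (s : S) :
    stateMarginal (saDist P μ0 π 0) s = μ0 s := by
  simp only [stateMarginal, saDist, ← Finset.mul_sum, hπ.2, mul_one]

lemma stateMarginal_saDist_succ (P : S → A → S → ℝ) (μ0 : S → ℝ) (hπ : IsPolicy π) (t : ℕ)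
    (s : S) :
    stateMarginal (saDist P μ0 π (t + 1)) s = ∑ s', ∑ a', saDist P μ0 π t s' a' * P s' a' s := by
  simp only [stateMarginal, saDist, ← Finset.mul_sum, hπ.2, mul_one]

lemma withPolicy_saDist (P : S → A → S → ℝ) (μ0 : S → ℝ) (hπ : IsPolicy π) (t : ℕ) :
    withPolicy (saDist P μ0 π t) π = saDist P μ0 π t := by
  funext s a
  cases t with
  | zero => rw [withPolicy, stateMarginal_saDist_zero P μ0 hπ, saDist]
  | succ t => rw [withPolicy, stateMarginal_saDist_succ P μ0 hπ, saDist]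

lemma saDist_mem_stdSimplex (hP : ∀ s a, P s a ∈ stdSimplex ℝ S) (hμ0 : μ0 ∈ stdSimplex ℝ S)
    (hπ : IsPolicy π) (t : ℕ) :
    Function.uncurry (saDist P μ0 π t) ∈ stdSimplex ℝ (S × A) := by
  suffices h : (∀ s a, 0 ≤ saDist P μ0 π t s a) ∧ ∑ s, stateMarginal (saDist P μ0 π t) s = 1 from
    ⟨fun x => h.1 x.1 x.2, (Fintype.sum_prod_type' _).trans h.2⟩
  induction t with
  | zero =>
    simp only [stateMarginal_saDist_zero P μ0 hπ, hμ0.2, and_true]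
    exact fun s a => mul_nonneg (hμ0.1 s) (hπ.1 s a)
  | succ t ih =>
    refine ⟨fun s a => mul_nonneg (Finset.sum_nonneg fun s' _ => Finset.sum_nonneg fun a' _ =>
      mul_nonneg (ih.1 s' a') ((hP s' a').1 s)) (hπ.1 s a), ?_⟩
    simp only [stateMarginal_saDist_succ P μ0 hπ]
    rw [Finset.sum_comm, ← ih.2]
    refine Finset.sum_congr rfl fun s' _ => ?_
    rw [Finset.sum_comm, stateMarginal]
    simp only [← Finset.mul_sum, (hP _ _).2, mul_one]

lemma hasSum_occ (hP : ∀ s a, P s a ∈ stdSimplex ℝ S) (hμ0 : μ0 ∈ stdSimplex ℝ S)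
    (hγ : γ ∈ Set.Ico 0 1) (hπ : IsPolicy π) (s : S) (a : A) :
    HasSum (fun t => (1 - γ) * (γ ^ t * saDist P μ0 π t s a)) (occ P μ0 γ π s a) := by
  refine (Summable.of_nonneg_of_le (fun t => ?_) (fun t => ?_)
    (summable_geometric_of_lt_one hγ.1 hγ.2)).hasSum.mul_left _
  · exact mul_nonneg (pow_nonneg hγ.1 t) ((saDist_mem_stdSimplex hP hμ0 hπ t).1 (s, a))
  · exact mul_le_of_le_one_right (pow_nonneg hγ.1 t)
      (mem_Icc_of_mem_stdSimplex (saDist_mem_stdSimplex hP hμ0 hπ t) (s, a)).2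

lemma occ_nonneg (hP : ∀ s a, P s a ∈ stdSimplex ℝ S) (hμ0 : μ0 ∈ stdSimplex ℝ S)
    (hγ : γ ∈ Set.Ico 0 1) (hπ : IsPolicy π) (s : S) (a : A) : 0 ≤ occ P μ0 γ π s a :=
  (hasSum_occ hP hμ0 hγ hπ s a).nonneg fun t => mul_nonneg (sub_nonneg.mpr hγ.2.le)
    (mul_nonneg (pow_nonneg hγ.1 t) ((saDist_mem_stdSimplex hP hμ0 hπ t).1 (s, a)))

lemma hasSum_stateMarginal_occ (hP : ∀ s a, P s a ∈ stdSimplex ℝ S)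
    (hμ0 : μ0 ∈ stdSimplex ℝ S) (hγ : γ ∈ Set.Ico 0 1) (hπ : IsPolicy π) (s : S) :
    HasSum (fun t => (1 - γ) * (γ ^ t * stateMarginal (saDist P μ0 π t) s))
      (stateMarginal (occ P μ0 γ π) s) := by
  simpa only [stateMarginal, Finset.mul_sum] using
    hasSum_sum fun a _ => hasSum_occ hP hμ0 hγ hπ s a

lemma withPolicy_occ (hP : ∀ s a, P s a ∈ stdSimplex ℝ S) (hμ0 : μ0 ∈ stdSimplex ℝ S)
    (hγ : γ ∈ Set.Ico 0 1) (hπ : IsPolicy π) :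
    withPolicy (occ P μ0 γ π) π = occ P μ0 γ π := by
  funext s a
  have hcond : ∀ t, stateMarginal (saDist P μ0 π t) s * π s a = saDist P μ0 π t s a := fun t =>
    congr_fun₂ (withPolicy_saDist P μ0 hπ t) s a
  refine ((hasSum_stateMarginal_occ hP hμ0 hγ hπ s).mul_right (π s a)).unique ?_
  simpa only [mul_assoc, hcond] using hasSum_occ hP hμ0 hγ hπ s a

lemma bellmanFlow_occ (hP : ∀ s a, P s a ∈ stdSimplex ℝ S) (hμ0 : μ0 ∈ stdSimplex ℝ S)
    (hγ : γ ∈ Set.Ico 0 1) (hπ : IsPolicy π) : BellmanFlow P μ0 γ (occ P μ0 γ π) := by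
  intro s
  have hinflow : HasSum
      (fun t => (1 - γ) * (γ ^ (t + 1) * stateMarginal (saDist P μ0 π (t + 1)) s))
      (γ * ∑ s', ∑ a', P s' a' s * occ P μ0 γ π s' a') := by
    have h := (hasSum_sum fun s' (_ : s' ∈ Finset.univ) => hasSum_sum
      fun a' (_ : a' ∈ Finset.univ) =>
        (hasSum_occ hP hμ0 hγ hπ s' a').mul_left (P s' a' s)).mul_left γ
    refine h.congr_fun fun t => ?_
    simp only [stateMarginal_saDist_succ P μ0 hπ, Finset.mul_sum]
    refine Finset.sum_congr rfl fun s' _ => Finset.sum_congr rfl fun a' _ => ?_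
    ring
  have h := hinflow.zero_add (f := fun t => (1 - γ) * (γ ^ t * stateMarginal (saDist P μ0 π t) s))
  rw [pow_zero, one_mul, stateMarginal_saDist_zero P μ0 hπ] at h
  exact (hasSum_stateMarginal_occ hP hμ0 hγ hπ s).unique h

lemma BellmanFlow.sum_mul_sub_Jret_le {d r : S → A → ℝ} (hP : ∀ s a, P s a ∈ stdSimplex ℝ S)
    (hμ0 : μ0 ∈ stdSimplex ℝ S) (hγ : γ ∈ Set.Ico 0 1) (hr : ∀ s a, r s a ∈ Set.Icc 0 1)
    (hd : BellmanFlow P μ0 γ d) (hπ : IsPolicy π) :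
    (1 - γ) * (∑ s, ∑ a, d s a * r s a - Jret P r μ0 γ π) ≤ l1Dist d (withPolicy d π) :=
  calc (1 - γ) * (∑ s, ∑ a, d s a * r s a - Jret P r μ0 γ π)
      ≤ (1 - γ) * l1Dist d (occ P μ0 γ π) :=
        mul_le_mul_of_nonneg_left (sum_mul_sub_sum_mul_le_l1Dist hr d _)
          (sub_nonneg.mpr hγ.2.le)
    _ ≤ l1Dist d (withPolicy d π) :=
        hd.l1Dist_le hP hγ.1 (bellmanFlow_occ hP hμ0 hγ hπ) hπ (withPolicy_occ hP hμ0 hγ hπ)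

end Occupancy

/-! ### Saddle points of the Lagrangian -/

section Saddle

/-- The left-over `(1 − γ) μ₀(s) + γ ∑_{s',a'} P(s|s',a') d(s',a') − d(s)` of the Bellman flow
equation of `d` at `s`; it is the coefficient of `v(s)` in the Lagrangian. -/
def flowResidual (P : S → A → S → ℝ) (μ0 : S → ℝ) (γ : ℝ) (d : S → A → ℝ) (s : S) : ℝ :=
  (1 - γ) * μ0 s + γ * ∑ s' : S, ∑ a' : A, P s' a' s * d s' a' - stateMarginal d s

/-- The objective `E_{w·dD}[r] − α E_{dD}[f(w)]` of the regularized linear program, as a function of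
the density ratio `w`. -/
noncomputable def regObjective (r dD : S → A → ℝ) (f : ℝ → ℝ) (α : ℝ) (w : S → A → ℝ) : ℝ :=
  ∑ s : S, ∑ a : A, dstar dD w s a * r s a - α * ∑ s : S, ∑ a : A, dD s a * f (w s a)

variable {P : S → A → S → ℝ} {r : S → A → ℝ} {μ0 : S → ℝ} {γ : ℝ} {dD : S → A → ℝ}
  {f : ℝ → ℝ} {α : ℝ} {v : S → ℝ} {w w' : S → A → ℝ}

lemma bellmanFlow_iff_flowResidual {d : S → A → ℝ} :
    BellmanFlow P μ0 γ d ↔ ∀ s, flowResidual P μ0 γ d s = 0 :=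
  forall_congr' fun _ => eq_comm.trans sub_eq_zero.symm

lemma sum_mul_flowResidual (v : S → ℝ) (d : S → A → ℝ) :
    ∑ s, v s * flowResidual P μ0 γ d s
      = (1 - γ) * ∑ s, μ0 s * v s + ∑ s, ∑ a, d s a * (γ * ∑ s', P s a s' * v s' - v s) := by
  have hinitial : ∑ s, v s * ((1 - γ) * μ0 s) = (1 - γ) * ∑ s, μ0 s * v s := by
    rw [Finset.mul_sum]
    exact Finset.sum_congr rfl fun s _ => by ring
  have hinflow : ∑ s, v s * (γ * ∑ s', ∑ a', P s' a' s * d s' a')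
      = ∑ s, ∑ a, d s a * (γ * ∑ s', P s a s' * v s') := by
    simp only [Finset.mul_sum]
    rw [Finset.sum_comm]
    refine Finset.sum_congr rfl fun s _ => ?_
    rw [Finset.sum_comm]
    exact Finset.sum_congr rfl fun a _ => Finset.sum_congr rfl fun s' _ => by ring
  have houtflow : ∑ s, v s * stateMarginal d s = ∑ s, ∑ a, d s a * v s := by
    simp only [stateMarginal, Finset.mul_sum, mul_comm]
  simp only [flowResidual, mul_sub, mul_add, Finset.sum_sub_distrib, Finset.sum_add_distrib,
    hinitial, hinflow, houtflow]
  ring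

lemma Lag_eq_regObjective_add (v : S → ℝ) (w : S → A → ℝ) :
    Lag P r μ0 γ dD f α v w
      = regObjective r dD f α w + ∑ s, v s * flowResidual P μ0 γ (dstar dD w) s := by
  have hreward : ∑ s, ∑ a, dD s a * (w s a * eV P r γ v s a)
      = ∑ s, ∑ a, dstar dD w s a * r s a
        + ∑ s, ∑ a, dstar dD w s a * (γ * ∑ s', P s a s' * v s' - v s) := by
    simp only [← Finset.sum_add_distrib]
    refine Finset.sum_congr rfl fun s _ => Finset.sum_congr rfl fun a _ => ?_
    rw [dstar, eV]
    ring
  rw [Lag, regObjective, hreward, sum_mul_flowResidual]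
  ring

lemma Lag_eq_regObjective (hw : BellmanFlow P μ0 γ (dstar dD w)) (v : S → ℝ) :
    Lag P r μ0 γ dD f α v w = regObjective r dD f α w := by
  rw [bellmanFlow_iff_flowResidual] at hw
  simp only [Lag_eq_regObjective_add, hw, mul_zero, Finset.sum_const_zero, add_zero]

lemma IsSaddle.bellmanFlow (h : IsSaddle P r μ0 γ dD f α v w) :
    BellmanFlow P μ0 γ (dstar dD w) := by
  rw [bellmanFlow_iff_flowResidual]
  set c := flowResidual P μ0 γ (dstar dD w)
  have hmin := h.2.1 (v - c)
  simp only [Lag_eq_regObjective_add, Pi.sub_apply, sub_mul, Finset.sum_sub_distrib] at hmin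
  have hsq : ∑ s, c s * c s = 0 :=
    le_antisymm (by linarith) (Finset.sum_nonneg fun s _ => mul_self_nonneg _)
  exact fun s => mul_self_eq_zero.mp <|
    (Finset.sum_eq_zero_iff_of_nonneg fun s _ => mul_self_nonneg (c s)).mp hsq s
      (Finset.mem_univ s)

omit [Fintype S] [Fintype A] in
lemma exists_dstar_eq {d : S → A → ℝ} {B : ℝ} (hdD : ∀ s a, 0 ≤ dD s a)
    (hd : ∀ s a, 0 ≤ d s a) (hcov : ∀ s a, d s a ≤ B * dD s a) :
    ∃ w : S → A → ℝ, (∀ s a, 0 ≤ w s a) ∧ (∀ s a, 0 < dD s a → w s a ≤ B) ∧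
      dstar dD w = d := by
  refine ⟨fun s a => d s a / dD s a, fun s a => div_nonneg (hd s a) (hdD s a),
    fun s a h => (div_le_iff₀ h).mpr (hcov s a), ?_⟩
  funext s a
  refine div_mul_cancel_of_imp fun h => le_antisymm ?_ (hd s a)
  simpa only [h, mul_zero] using hcov s a

lemma IsSaddle.Jret_sub_le (h : IsSaddle P r μ0 γ dD f α v w)
    (hP : ∀ s a, P s a ∈ stdSimplex ℝ S) (hμ0 : μ0 ∈ stdSimplex ℝ S) (hγ : γ ∈ Set.Ico 0 1)
    (hdD : Function.uncurry dD ∈ stdSimplex ℝ (S × A)) (hα : 0 ≤ α) (hf : ∀ x, 0 ≤ x → 0 ≤ f x)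
    {π0 : S → A → ℝ} (hπ0 : IsPolicy π0) {Bw Bf : ℝ}
    (hcov : ∀ s a, occ P μ0 γ π0 s a ≤ Bw * dD s a) (hBf : ∀ x, 0 ≤ x → x ≤ Bw → f x ≤ Bf) :
    Jret P r μ0 γ π0 - ∑ s, ∑ a, dstar dD w s a * r s a ≤ α * Bf := by
  have hdD_nonneg : ∀ s a, 0 ≤ dD s a := fun s a => hdD.1 (s, a)
  obtain ⟨w0, hw0, hw0B, hd0⟩ :=
    exists_dstar_eq hdD_nonneg (occ_nonneg hP hμ0 hγ hπ0) hcov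
  have hflow0 : BellmanFlow P μ0 γ (dstar dD w0) := hd0 ▸ bellmanFlow_occ hP hμ0 hγ hπ0
  have hopt : regObjective r dD f α w0 ≤ regObjective r dD f α w := by
    simpa only [Lag_eq_regObjective hflow0, Lag_eq_regObjective h.bellmanFlow]
      using h.2.2 w0 hw0
  have hpenalty : 0 ≤ ∑ s, ∑ a, dD s a * f (w s a) :=
    Finset.sum_nonneg fun s _ => Finset.sum_nonneg fun a _ =>
      mul_nonneg (hdD_nonneg s a) (hf _ (h.1 s a))
  have hpenalty0 : ∑ s, ∑ a, dD s a * f (w0 s a) ≤ Bf :=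
    calc ∑ s, ∑ a, dD s a * f (w0 s a) ≤ ∑ s, ∑ a, dD s a * Bf := by
          refine Finset.sum_le_sum fun s _ => Finset.sum_le_sum fun a _ => ?_
          rcases (hdD_nonneg s a).eq_or_lt with h0 | h0
          · rw [← h0, zero_mul, zero_mul]
          · exact mul_le_mul_of_nonneg_left (hBf _ (hw0 s a) (hw0B s a h0)) h0.le
      _ = Bf := by
          have hsum : ∑ s, ∑ a, dD s a = 1 := (Fintype.sum_prod_type' dD).symm.trans hdD.2
          simp only [← Finset.sum_mul, hsum, one_mul]
  rw [regObjective, regObjective, hd0] at hopt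
  rw [Jret]
  linarith [mul_nonneg hα hpenalty, mul_le_mul_of_nonneg_left hpenalty0 hα]

lemma sq_l2nrm (hdD : ∀ s a, 0 ≤ dD s a) (g : S → A → ℝ) :
    l2nrm dD g ^ 2 = ∑ s, ∑ a, dD s a * g s a ^ 2 :=
  Real.sq_sqrt <| Finset.sum_nonneg fun s _ => Finset.sum_nonneg fun a _ =>
    mul_nonneg (hdD s a) (sq_nonneg _)

lemma l1Dist_dstar_le_l2nrm (hdD : Function.uncurry dD ∈ stdSimplex ℝ (S × A))
    (w w' : S → A → ℝ) : l1Dist (dstar dD w) (dstar dD w') ≤ l2nrm dD (w - w') := by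
  have habs : ∀ s a, |dstar dD w s a - dstar dD w' s a| = dD s a * |(w - w') s a| := by
    intro s a
    have hnonneg : 0 ≤ dD s a := hdD.1 (s, a)
    rw [dstar, dstar, ← sub_mul, abs_mul, abs_of_nonneg hnonneg, mul_comm]
    rfl
  refine Real.le_sqrt_of_sq_le ?_
  simp only [l1Dist, habs, ← Fintype.sum_prod_type']
  calc (∑ x : S × A, dD x.1 x.2 * |(w - w') x.1 x.2|) ^ 2
      ≤ (∑ x, Function.uncurry dD x) * ∑ x : S × A, dD x.1 x.2 * (w - w') x.1 x.2 ^ 2 :=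
        Finset.sum_sq_le_sum_mul_sum_of_sq_le_mul _ (fun x _ => hdD.1 x)
          (fun x _ => mul_nonneg (hdD.1 x) (sq_nonneg _)) fun x _ => by
            rw [mul_pow, sq_abs, Function.uncurry]
            exact (by ring : _ = _).le
    _ = ∑ x : S × A, dD x.1 x.2 * (w - w') x.1 x.2 ^ 2 := by rw [hdD.2, one_mul]

lemma add_le_Lag_add_smul (hdD : ∀ s a, 0 ≤ dD s a) (hα : 0 ≤ α) {Mf : ℝ}
    (hf : StrongConvexOn (Set.Ici 0) Mf f) (hw : ∀ s a, 0 ≤ w s a) (hw' : ∀ s a, 0 ≤ w' s a)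
    (v : S → ℝ) {p q : ℝ} (hp : 0 ≤ p) (hq : 0 ≤ q) (hpq : p + q = 1) :
    p * Lag P r μ0 γ dD f α v w + q * Lag P r μ0 γ dD f α v w'
        + α * (p * q * (Mf / 2 * l2nrm dD (w - w') ^ 2))
      ≤ Lag P r μ0 γ dD f α v (p • w + q • w') := by
  have hlinear : ∑ s, ∑ a, dD s a * ((p • w + q • w') s a * eV P r γ v s a)
      = p * ∑ s, ∑ a, dD s a * (w s a * eV P r γ v s a)
        + q * ∑ s, ∑ a, dD s a * (w' s a * eV P r γ v s a) := by
    simp only [Finset.mul_sum, ← Finset.sum_add_distrib]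
    refine Finset.sum_congr rfl fun s _ => Finset.sum_congr rfl fun a _ => ?_
    simp only [Pi.add_apply, Pi.smul_apply, smul_eq_mul]
    ring
  have hconvex : ∑ s, ∑ a, dD s a * f ((p • w + q • w') s a)
      ≤ p * ∑ s, ∑ a, dD s a * f (w s a) + q * ∑ s, ∑ a, dD s a * f (w' s a)
        - p * q * (Mf / 2 * l2nrm dD (w - w') ^ 2) := by
    simp only [sq_l2nrm hdD, Finset.mul_sum, ← Finset.sum_add_distrib, ← Finset.sum_sub_distrib]
    refine Finset.sum_le_sum fun s _ => Finset.sum_le_sum fun a _ => ?_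
    have h := hf.2 (hw s a) (hw' s a) hp hq hpq
    simp only [Real.norm_eq_abs, sq_abs] at h
    refine (mul_le_mul_of_nonneg_left h (hdD s a)).trans_eq ?_
    simp only [Pi.sub_apply, smul_eq_mul]
    ring
  have hconst : p * ((1 - γ) * ∑ s, μ0 s * v s) + q * ((1 - γ) * ∑ s, μ0 s * v s)
      = (1 - γ) * ∑ s, μ0 s * v s := by rw [← add_mul, hpq, one_mul]
  simp only [Lag, hlinear]
  linarith [mul_le_mul_of_nonneg_left hconvex hα]

lemma IsSaddle.sq_l2nrm_sub_le (h : IsSaddle P r μ0 γ dD f α v w) (hdD : ∀ s a, 0 ≤ dD s a)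
    (hα : 0 ≤ α) {Mf : ℝ} (hf : StrongConvexOn (Set.Ici 0) Mf f) (hw' : ∀ s a, 0 ≤ w' s a) :
    α * Mf / 4 * l2nrm dD (w - w') ^ 2
      ≤ Lag P r μ0 γ dD f α v w - Lag P r μ0 γ dD f α v w' := by
  have hmid := add_le_Lag_add_smul (P := P) (r := r) (μ0 := μ0) (γ := γ) hdD hα hf h.1 hw' v
    (p := 1 / 2) (q := 1 / 2) (by norm_num) (by norm_num) (by norm_num)
  have hmax := h.2.2 ((1 / 2 : ℝ) • w + (1 / 2 : ℝ) • w') fun s a =>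
    add_nonneg (mul_nonneg (by norm_num) (h.1 s a)) (mul_nonneg (by norm_num) (hw' s a))
  linarith

lemma IsSaddle.l2nrm_sub_le (h : IsSaddle P r μ0 γ dD f α v w) (hdD : ∀ s a, 0 ≤ dD s a)
    (hα : 0 < α) {Mf : ℝ} (hMf : 0 < Mf) (hf : StrongConvexOn (Set.Ici 0) Mf f)
    (hw' : ∀ s a, 0 ≤ w' s a) :
    l2nrm dD (w - w')
      ≤ 2 * √((Lag P r μ0 γ dD f α v w - Lag P r μ0 γ dD f α v w') / (α * Mf)) := by
  have hdist := h.sq_l2nrm_sub_le hdD hα.le hf hw'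
  set gap := Lag P r μ0 γ dD f α v w - Lag P r μ0 γ dD f α v w'
  have hsq : (l2nrm dD (w - w') / 2) ^ 2 ≤ gap / (α * Mf) := by
    rw [le_div_iff₀ (mul_pos hα hMf)]
    linarith
  linarith [Real.le_sqrt_of_sq_le hsq]

lemma IsSaddle.sub_Jret_extractPolicy_le [Nonempty A] (h : IsSaddle P r μ0 γ dD f α v w)
    (hP : ∀ s a, P s a ∈ stdSimplex ℝ S) (hμ0 : μ0 ∈ stdSimplex ℝ S) (hγ : γ ∈ Set.Ico 0 1)
    (hr : ∀ s a, r s a ∈ Set.Icc 0 1) (hdD : Function.uncurry dD ∈ stdSimplex ℝ (S × A))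
    (hα : 0 < α) {Mf : ℝ} (hMf : 0 < Mf) (hf : StrongConvexOn (Set.Ici 0) Mf f)
    (hw' : ∀ s a, 0 ≤ w' s a) :
    ∑ s, ∑ a, dstar dD w s a * r s a - Jret P r μ0 γ (extractPolicy (behPolicy dD) w')
      ≤ 4 / (1 - γ)
        * √((Lag P r μ0 γ dD f α v w - Lag P r μ0 γ dD f α v w') / (α * Mf)) := by
  have hdD_nonneg : ∀ s a, 0 ≤ dD s a := fun s a => hdD.1 (s, a)
  have hπ := isPolicy_extractPolicy_behPolicy hdD_nonneg hw'
  rw [div_mul_eq_mul_div, le_div_iff₀' (sub_pos.mpr hγ.2)]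
  calc _ ≤ l1Dist (dstar dD w) (withPolicy (dstar dD w) (extractPolicy (behPolicy dD) w')) :=
        h.bellmanFlow.sum_mul_sub_Jret_le hP hμ0 hγ hr hπ
    _ ≤ 2 * l1Dist (dstar dD w) (dstar dD w') :=
        l1Dist_withPolicy_self_le hπ (withPolicy_extractPolicy_behPolicy hdD_nonneg hw')
    _ ≤ 2 * l2nrm dD (w - w') := by gcongr; exact l1Dist_dstar_le_l2nrm hdD w w'
    _ ≤ _ := by linarith [h.l2nrm_sub_le hdD_nonneg hα hMf hf hw']

end Saddle

/-! ### The empirical Lagrangian -/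

section Empirical

/-- The contribution of a single transition `((s,a),s')` to the empirical Lagrangian. -/
def transitionTerm (r : S → A → ℝ) (γ : ℝ) (f : ℝ → ℝ) (α : ℝ) (v : S → ℝ) (w : S → A → ℝ)
    (x : (S × A) × S) : ℝ :=
  w x.1.1 x.1.2 * (r x.1.1 x.1.2 + γ * v x.2 - v x.1.1) - α * f (w x.1.1 x.1.2)

variable {P : S → A → S → ℝ} {r : S → A → ℝ} {μ0 : S → ℝ} {γ : ℝ} {dD : S → A → ℝ}
  {f : ℝ → ℝ} {α : ℝ}

omit [Fintype S] [Fintype A] in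
lemma abs_transitionTerm_le (hγ : 0 ≤ γ) (hr : ∀ s a, r s a ∈ Set.Icc 0 1) (hα : 0 ≤ α)
    {v : S → ℝ} {w : S → A → ℝ} {Bw Bf Bv : ℝ} (hw : ∀ s a, 0 ≤ w s a ∧ w s a ≤ Bw)
    (hv : ∀ s, |v s| ≤ Bv) (hf : ∀ x, 0 ≤ x → x ≤ Bw → |f x| ≤ Bf) (x : (S × A) × S) :
    |transitionTerm r γ f α v w x| ≤ α * Bf + Bw * ((1 + γ) * Bv + 1) := by
  obtain ⟨⟨s, a⟩, s'⟩ := x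
  obtain ⟨hw_nonneg, hw_le⟩ := hw s a
  have hresidual : |r s a + γ * v s' - v s| ≤ (1 + γ) * Bv + 1 :=
    calc |r s a + γ * v s' - v s| ≤ |r s a| + |γ * v s'| + |v s| :=
          (abs_sub _ _).trans (add_le_add_left (abs_add_le _ _) _)
      _ ≤ 1 + γ * Bv + Bv := by
          rw [abs_of_nonneg (hr s a).1, abs_mul, abs_of_nonneg hγ]
          gcongr
          exacts [(hr s a).2, hv s', hv s]
      _ = (1 + γ) * Bv + 1 := by ring
  calc |transitionTerm r γ f α v w ((s, a), s')|
      ≤ |α * f (w s a)| + |w s a * (r s a + γ * v s' - v s)| := by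
        rw [add_comm]
        exact abs_sub _ _
    _ ≤ α * Bf + Bw * ((1 + γ) * Bv + 1) := by
        rw [abs_mul, abs_mul, abs_of_nonneg hα, abs_of_nonneg hw_nonneg]
        gcongr
        exacts [hf _ hw_nonneg hw_le, hw_nonneg.trans hw_le]

lemma sum_tupleWeight_mul_transitionTerm (hP : ∀ s a, ∑ s', P s a s' = 1) (v : S → ℝ)
    (w : S → A → ℝ) :
    ∑ x, tupleWeight P dD x * transitionTerm r γ f α v w x
      = ∑ s, ∑ a, dD s a * (w s a * eV P r γ v s a) - α * ∑ s, ∑ a, dD s a * f (w s a) := by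
  simp only [Fintype.sum_prod_type, Finset.mul_sum, ← Finset.sum_sub_distrib]
  refine Finset.sum_congr rfl fun s _ => Finset.sum_congr rfl fun a _ => ?_
  calc ∑ s', tupleWeight P dD ((s, a), s') * transitionTerm r γ f α v w ((s, a), s')
      = ∑ s', (dD s a * (w s a * (r s a - v s)) - α * (dD s a * f (w s a))) * P s a s'
          + ∑ s', dD s a * w s a * γ * (P s a s' * v s') := by
        rw [← Finset.sum_add_distrib]
        refine Finset.sum_congr rfl fun s' _ => ?_
        rw [tupleWeight, transitionTerm]
        ring
    _ = dD s a * (w s a * eV P r γ v s a) - α * (dD s a * f (w s a)) := by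
        rw [← Finset.mul_sum, ← Finset.mul_sum, hP, eV]
        ring

lemma empLag_sub_Lag (hP : ∀ s a, ∑ s', P s a s' = 1) {n n0 : ℕ} (D : Fin n → (S × A) × S)
    (D0 : Fin n0 → S) (v : S → ℝ) (w : S → A → ℝ) :
    empLag r γ f α D D0 v w - Lag P r μ0 γ dD f α v w
      = (1 - γ) * ((n0 : ℝ)⁻¹ * ∑ j, v (D0 j) - ∑ s, μ0 s * v s)
        + ((n : ℝ)⁻¹ * ∑ i, transitionTerm r γ f α v w (D i)
          - ∑ x, tupleWeight P dD x * transitionTerm r γ f α v w x) := by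
  rw [sum_tupleWeight_mul_transitionTerm hP, empLag, Lag]
  simp only [transitionTerm, Finset.sum_sub_distrib, ← Finset.mul_sum]
  ring

lemma IsProRLOutput.Lag_sub_Lag_le {V : Finset (S → ℝ)} {W : Finset (S → A → ℝ)} {n n0 : ℕ}
    {D : Fin n → (S × A) × S} {D0 : Fin n0 → S} {vhat vst : S → ℝ} {what wst : S → A → ℝ}
    (hout : IsProRLOutput r γ f α V W D D0 vhat what)
    (h : IsSaddle P r μ0 γ dD f α vst wst) (hvst : vst ∈ V) (hwst : wst ∈ W) {η : ℝ}
    (hdev : ∀ v ∈ V, ∀ w ∈ W,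
      |empLag r γ f α D D0 v w - Lag P r μ0 γ dD f α v w| ≤ η) :
    Lag P r μ0 γ dD f α vst wst - Lag P r μ0 γ dD f α vst what ≤ 2 * η := by
  obtain ⟨-, hwhat, hmin, hmax⟩ := hout
  obtain ⟨u, hu, humin⟩ := V.exists_min_image (fun v => empLag r γ f α D D0 v wst) ⟨vst, hvst⟩
  have hupper : Lag P r μ0 γ dD f α vst wst ≤ empLag r γ f α D D0 vhat what + η :=
    calc Lag P r μ0 γ dD f α vst wst ≤ Lag P r μ0 γ dD f α u wst := h.2.1 u
      _ ≤ empLag r γ f α D D0 u wst + η := by linarith [abs_le.mp (hdev u hu wst hwst)]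
      _ ≤ empLag r γ f α D D0 vhat what + η := by linarith [hmax wst hwst u hu humin]
  have hlower : empLag r γ f α D D0 vhat what ≤ Lag P r μ0 γ dD f α vst what + η :=
    calc empLag r γ f α D D0 vhat what ≤ empLag r γ f α D D0 vst what := hmin vst hvst
      _ ≤ Lag P r μ0 γ dD f α vst what + η := by linarith [abs_le.mp (hdev vst hvst what hwhat)]
  linarith

variable [MeasurableSpace S] [MeasurableSpace A] [MeasurableSingletonClass S]
  [MeasurableSingletonClass A] {V : Finset (S → ℝ)} {W : Finset (S → A → ℝ)} {n n0 : ℕ}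

omit [Fintype A] [MeasurableSpace A] [MeasurableSingletonClass A] in
lemma measure_pi_exists_lt_abs_initialMean_sub_le (hμ0 : μ0 ∈ stdSimplex ℝ S) (hn0 : 0 < n0)
    {Bv δ : ℝ} (hV : ∀ v ∈ V, ∀ s, |v s| ≤ Bv) (hδ : 0 < δ) :
    Measure.pi (fun _ : Fin n0 => discMeasure μ0)
        {x | ∃ v ∈ V, Bv * √(2 * Real.log (4 * V.card / δ) / n0)
          < |(n0 : ℝ)⁻¹ * ∑ j, v (x j) - ∑ s, μ0 s * v s|}
      ≤ ENNReal.ofReal (δ / 2) := by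
  have := isProbabilityMeasure_discMeasure hμ0
  have : Nonempty (Fin n0) := Fin.pos_iff_nonempty.mp hn0
  have hlog : 2 * (V.card : ℝ) / (δ / 2) = 4 * V.card / δ := by
    rw [div_div_eq_mul_div]
    ring
  simpa only [hlog, Fintype.card_fin, integral_discMeasure hμ0.1] using
    measure_pi_exists_lt_abs_mean_sub_integral_le (ι := Fin n0) (μ := discMeasure μ0) (s := V)
      (g := fun v => v) (fun v _ => .of_discrete) hV (half_pos hδ)

lemma measure_pi_exists_lt_abs_transitionMean_sub_le (hP : ∀ s a, P s a ∈ stdSimplex ℝ S)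
    (hdD : Function.uncurry dD ∈ stdSimplex ℝ (S × A)) (hn : 0 < n) {B δ : ℝ}
    (hB : ∀ v ∈ V, ∀ w ∈ W, ∀ x, |transitionTerm r γ f α v w x| ≤ B) (hδ : 0 < δ) :
    Measure.pi (fun _ : Fin n => discMeasure (tupleWeight P dD))
        {x | ∃ v ∈ V, ∃ w ∈ W, B * √(2 * Real.log (4 * (V.card * W.card) / δ) / n)
          < |(n : ℝ)⁻¹ * ∑ i, transitionTerm r γ f α v w (x i)
            - ∑ y, tupleWeight P dD y * transitionTerm r γ f α v w y|}
      ≤ ENNReal.ofReal (δ / 2) := by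
  have hp := tupleWeight_mem_stdSimplex hP hdD
  have := isProbabilityMeasure_discMeasure hp
  have : Nonempty (Fin n) := Fin.pos_iff_nonempty.mp hn
  have hlog : 2 * ((V.card : ℝ) * W.card) / (δ / 2) = 4 * (V.card * W.card) / δ := by
    rw [div_div_eq_mul_div]
    ring
  have h := measure_pi_exists_lt_abs_mean_sub_integral_le (ι := Fin n)
    (μ := discMeasure (tupleWeight P dD)) (s := V ×ˢ W)
    (g := fun k => transitionTerm r γ f α k.1 k.2) (fun _ _ => .of_discrete)
    (fun k hk => hB k.1 (Finset.mem_product.mp hk).1 k.2 (Finset.mem_product.mp hk).2)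
    (half_pos hδ)
  simpa only [Finset.card_product, Nat.cast_mul, hlog, Fintype.card_fin,
    integral_discMeasure hp.1, Prod.exists, Finset.mem_product, and_assoc, exists_and_left] using h

lemma dataMeasure_exists_epsStat_lt_le (hP : ∀ s a, P s a ∈ stdSimplex ℝ S)
    (hμ0 : μ0 ∈ stdSimplex ℝ S) (hγ : γ ∈ Set.Ico 0 1) (hr : ∀ s a, r s a ∈ Set.Icc 0 1)
    (hdD : Function.uncurry dD ∈ stdSimplex ℝ (S × A)) (hn : 0 < n) (hn0 : 0 < n0) (hα : 0 ≤ α)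
    {Bw Bf Bv δ : ℝ} (hf : ∀ x, 0 ≤ x → x ≤ Bw → |f x| ≤ Bf)
    (hW : ∀ w ∈ W, ∀ s a, 0 ≤ w s a ∧ w s a ≤ Bw) (hV : ∀ v ∈ V, ∀ s, |v s| ≤ Bv) (hδ : 0 < δ) :
    dataMeasure P dD μ0 n n0 {ω | ∃ v ∈ V, ∃ w ∈ W,
        epsStat γ α Bv Bf Bw ((1 + γ) * Bv + 1) δ V.card W.card n n0
          < |empLag r γ f α ω.1 ω.2 v w - Lag P r μ0 γ dD f α v w|}
      ≤ ENNReal.ofReal δ := by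
  have := isProbabilityMeasure_discMeasure (tupleWeight_mem_stdSimplex hP hdD)
  have := isProbabilityMeasure_discMeasure hμ0
  have hinitial := measure_pi_exists_lt_abs_initialMean_sub_le hμ0 hn0 hV hδ
  have htrans := measure_pi_exists_lt_abs_transitionMean_sub_le hP hdD hn
    (fun v hv w hw => abs_transitionTerm_le hγ.1 hr hα (hW w hw) (hV v hv) hf) hδ
  set E0 : Set (Fin n0 → S) := {x | _}
  set E : Set (Fin n → (S × A) × S) := {x | _}
  have hsub : {ω | ∃ v ∈ V, ∃ w ∈ W,
        epsStat γ α Bv Bf Bw ((1 + γ) * Bv + 1) δ V.card W.card n n0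
          < |empLag r γ f α ω.1 ω.2 v w - Lag P r μ0 γ dD f α v w|}
      ⊆ E ×ˢ Set.univ ∪ Set.univ ×ˢ E0 := by
    rintro ω ⟨v, hv, w, hw, hlt⟩
    contrapose! hlt
    have hω : ω.1 ∉ E ∧ ω.2 ∉ E0 := by
      simpa only [Set.mem_union, Set.mem_prod, Set.mem_univ, and_true, true_and, not_or] using hlt
    have hE := not_lt.mp fun h => hω.1 ⟨v, hv, w, hw, h⟩
    have hE0 := not_lt.mp fun h => hω.2 ⟨v, hv, h⟩
    have hγ' : 0 ≤ 1 - γ := sub_nonneg.mpr hγ.2.le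
    rw [empLag_sub_Lag fun s a => (hP s a).2, epsStat, mul_assoc (1 - γ)]
    refine (abs_add_le _ _).trans (add_le_add ?_ hE)
    rw [abs_mul, abs_of_nonneg hγ']
    exact mul_le_mul_of_nonneg_left hE0 hγ'
  calc _ ≤ dataMeasure P dD μ0 n n0 (E ×ˢ Set.univ ∪ Set.univ ×ˢ E0) := measure_mono hsub
    _ ≤ ENNReal.ofReal (δ / 2) + ENNReal.ofReal (δ / 2) := by
        refine (measure_union_le _ _).trans ?_
        rw [dataMeasure, Measure.prod_prod, Measure.prod_prod, measure_univ, measure_univ, mul_one,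
          one_mul]
        exact add_le_add htrans hinitial
    _ = ENNReal.ofReal δ := by
        rw [← ENNReal.ofReal_add (half_pos hδ).le (half_pos hδ).le, add_halves]

lemma one_sub_ofReal_le_dataMeasure_forall_le_epsStat (hP : ∀ s a, P s a ∈ stdSimplex ℝ S)
    (hμ0 : μ0 ∈ stdSimplex ℝ S) (hγ : γ ∈ Set.Ico 0 1) (hr : ∀ s a, r s a ∈ Set.Icc 0 1)
    (hdD : Function.uncurry dD ∈ stdSimplex ℝ (S × A)) (hn : 0 < n) (hn0 : 0 < n0) (hα : 0 ≤ α)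
    {Bw Bf Bv δ : ℝ} (hf : ∀ x, 0 ≤ x → x ≤ Bw → |f x| ≤ Bf)
    (hW : ∀ w ∈ W, ∀ s a, 0 ≤ w s a ∧ w s a ≤ Bw) (hV : ∀ v ∈ V, ∀ s, |v s| ≤ Bv) (hδ : 0 < δ) :
    1 - ENNReal.ofReal δ ≤ dataMeasure P dD μ0 n n0 {ω | ∀ v ∈ V, ∀ w ∈ W,
      |empLag r γ f α ω.1 ω.2 v w - Lag P r μ0 γ dD f α v w|
        ≤ epsStat γ α Bv Bf Bw ((1 + γ) * Bv + 1) δ V.card W.card n n0} := by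
  have := isProbabilityMeasure_dataMeasure hP hμ0 hdD n n0
  calc 1 - ENNReal.ofReal δ ≤ 1 - dataMeasure P dD μ0 n n0 {ω | ∃ v ∈ V, ∃ w ∈ W,
          epsStat γ α Bv Bf Bw ((1 + γ) * Bv + 1) δ V.card W.card n n0
            < |empLag r γ f α ω.1 ω.2 v w - Lag P r μ0 γ dD f α v w|} :=
        tsub_le_tsub_left
          (dataMeasure_exists_epsStat_lt_le hP hμ0 hγ hr hdD hn hn0 hα hf hW hV hδ) 1
    _ = _ := by
        rw [← prob_compl_eq_one_sub .of_discrete]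
        simp only [Set.compl_ofPred, not_exists, not_and, not_lt]

end Empirical

/-! ### Sample complexity -/

section SampleComplexity

lemma mul_sqrt_two_mul_div_le {B L m t : ℝ} (ht : 0 ≤ t) (hm : 0 < m)
    (h : 2 * B ^ 2 * L ≤ m * t ^ 2) : B * √(2 * L / m) ≤ t := by
  have hsq : B ^ 2 * (2 * L / m) ≤ t ^ 2 := by
    rw [← mul_div_assoc, div_le_iff₀ hm]
    linarith
  calc B * √(2 * L / m) ≤ |B| * √(2 * L / m) :=
        mul_le_mul_of_nonneg_right (le_abs_self B) (Real.sqrt_nonneg _)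
    _ = √(B ^ 2 * (2 * L / m)) := by rw [Real.sqrt_mul (sq_nonneg B), Real.sqrt_sq_eq_abs]
    _ ≤ t := Real.sqrt_le_iff.mpr ⟨ht, hsq⟩

lemma epsStat_le {γ α Bv Bf Bw Be δ η : ℝ} {nV nW n n0 : ℕ} (hη : 0 ≤ η) (hn : 0 < n)
    (hn0 : 0 < n0)
    (hsize : 8 * (α * Bf + Bw * Be) ^ 2 * Real.log (4 * nV * nW / δ) ≤ n * η ^ 2)
    (hsize0 : 8 * ((1 - γ) * Bv) ^ 2 * Real.log (4 * nV / δ) ≤ n0 * η ^ 2) :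
    epsStat γ α Bv Bf Bw Be δ nV nW n n0 ≤ η := by
  rw [epsStat, ← mul_assoc 4]
  have hinitial : (1 - γ) * Bv * √(2 * Real.log (4 * nV / δ) / n0) ≤ η / 2 :=
    mul_sqrt_two_mul_div_le (div_nonneg hη zero_le_two) (Nat.cast_pos.mpr hn0) (by linarith)
  have htrans : (α * Bf + Bw * Be) * √(2 * Real.log (4 * nV * nW / δ) / n) ≤ η / 2 :=
    mul_sqrt_two_mul_div_le (div_nonneg hη zero_le_two) (Nat.cast_pos.mpr hn) (by linarith)
  linarith

-- The right-hand side is the uniform deviation `η` for which `4 / (1 - γ) * √(2 η / (α M_f))` is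
-- `ε / 2` when `α = ε / (2 B_{f,0})`; this fixes the constant `131072 = 8 * 256 ^ 2 / 4`.
lemma epsStat_le_of_sampleSize {γ ε Mf Bf0 Bv Bf Bw Be δ : ℝ} {nV nW n n0 : ℕ} (hγ : γ < 1)
    (hε : 0 < ε) (hMf : 0 < Mf) (hBf0 : 0 < Bf0) (hn : 0 < n) (hn0 : 0 < n0)
    (hsize : 131072 * (ε * Bf + 2 * Bw * Be * Bf0) ^ 2 / (ε ^ 6 * Mf ^ 2 * (1 - γ) ^ 4)
      * Real.log (4 * nV * nW / δ) ≤ n)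
    (hsize0 : 131072 * (2 * Bv * Bf0) ^ 2 / (ε ^ 6 * Mf ^ 2 * (1 - γ) ^ 2)
      * Real.log (4 * nV / δ) ≤ n0) :
    epsStat γ (ε / (2 * Bf0)) Bv Bf Bw Be δ nV nW n n0
      ≤ ε ^ 3 * Mf * (1 - γ) ^ 2 / (256 * Bf0) := by
  have hγ' : 0 < 1 - γ := sub_pos.mpr hγ
  set η := ε ^ 3 * Mf * (1 - γ) ^ 2 / (256 * Bf0) with hη
  have hη_pos : 0 < η := by positivity
  refine epsStat_le hη_pos.le hn hn0 ?_ ?_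
  · calc 8 * (ε / (2 * Bf0) * Bf + Bw * Be) ^ 2 * Real.log (4 * nV * nW / δ)
        = 131072 * (ε * Bf + 2 * Bw * Be * Bf0) ^ 2 / (ε ^ 6 * Mf ^ 2 * (1 - γ) ^ 4)
            * Real.log (4 * nV * nW / δ) * η ^ 2 := by rw [hη]; field_simp; ring
      _ ≤ n * η ^ 2 := by gcongr
  · calc 8 * ((1 - γ) * Bv) ^ 2 * Real.log (4 * nV / δ)
        = 131072 * (2 * Bv * Bf0) ^ 2 / (ε ^ 6 * Mf ^ 2 * (1 - γ) ^ 2)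
            * Real.log (4 * nV / δ) * η ^ 2 := by rw [hη]; field_simp; ring
      _ ≤ n0 * η ^ 2 := by gcongr

lemma regret_bound_eq {γ ε Mf B : ℝ} (hγ : γ < 1) (hε : 0 < ε) (hMf : 0 < Mf) (hB : 0 < B) :
    ε / (2 * B) * B
      + 4 / (1 - γ) * √(2 * (ε ^ 3 * Mf * (1 - γ) ^ 2 / (256 * B)) / (ε / (2 * B) * Mf)) = ε := by
  have hγ' : 0 < 1 - γ := sub_pos.mpr hγ
  have hradicand : 2 * (ε ^ 3 * Mf * (1 - γ) ^ 2 / (256 * B)) / (ε / (2 * B) * Mf)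
      = (ε * (1 - γ) / 8) ^ 2 := by field_simp; norm_num
  rw [hradicand, Real.sqrt_sq (by positivity)]
  field_simp
  norm_num

variable [Nonempty A] {P : S → A → S → ℝ} {r : S → A → ℝ} {μ0 : S → ℝ} {γ : ℝ} {dD : S → A → ℝ}
  {f : ℝ → ℝ} {α : ℝ} {V : Finset (S → ℝ)} {W : Finset (S → A → ℝ)} {n n0 : ℕ}
  {vst : S → ℝ} {wst : S → A → ℝ}

lemma IsProRLOutput.Jret_sub_le {D : Fin n → (S × A) × S} {D0 : Fin n0 → S} {vhat : S → ℝ}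
    {what π0 : S → A → ℝ} (hout : IsProRLOutput r γ f α V W D D0 vhat what)
    (hP : ∀ s a, P s a ∈ stdSimplex ℝ S)
    (hμ0 : μ0 ∈ stdSimplex ℝ S) (hγ : γ ∈ Set.Ico 0 1) (hr : ∀ s a, r s a ∈ Set.Icc 0 1)
    (hdD : Function.uncurry dD ∈ stdSimplex ℝ (S × A)) (hα : 0 < α) {Mf Bw0 Bf0 η : ℝ}
    (hMf : 0 < Mf) (hf : StrongConvexOn (Set.Ici 0) Mf f) (hf_nonneg : ∀ x, 0 ≤ x → 0 ≤ f x)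
    (hπ0 : IsPolicy π0) (hcov : ∀ s a, occ P μ0 γ π0 s a ≤ Bw0 * dD s a)
    (hBf0 : ∀ x, 0 ≤ x → x ≤ Bw0 → f x ≤ Bf0)
    (hsaddle : IsSaddle P r μ0 γ dD f α vst wst) (hvst : vst ∈ V) (hwst : wst ∈ W)
    (hW : ∀ w ∈ W, ∀ s a, 0 ≤ w s a)
    (hdev : ∀ v ∈ V, ∀ w ∈ W, |empLag r γ f α D D0 v w - Lag P r μ0 γ dD f α v w| ≤ η) :
    Jret P r μ0 γ π0 - Jret P r μ0 γ (extractPolicy (behPolicy dD) what)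
      ≤ α * Bf0 + 4 / (1 - γ) * √(2 * η / (α * Mf)) := by
  have hregularization := hsaddle.Jret_sub_le hP hμ0 hγ hdD hα.le hf_nonneg hπ0 hcov hBf0
  have hestimation :=
    hsaddle.sub_Jret_extractPolicy_le hP hμ0 hγ hr hdD hα hMf hf (hW what hout.2.1)
  have hgap : 4 / (1 - γ)
      * √((Lag P r μ0 γ dD f α vst wst - Lag P r μ0 γ dD f α vst what) / (α * Mf))
        ≤ 4 / (1 - γ) * √(2 * η / (α * Mf)) := by
    have hγ' : 0 < 1 - γ := sub_pos.mpr hγ.2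
    gcongr
    exact hout.Lag_sub_Lag_le hsaddle hvst hwst hdev
  linarith

variable [MeasurableSpace S] [MeasurableSpace A] [MeasurableSingletonClass S]
  [MeasurableSingletonClass A]

theorem stmt1_general (hP : ∀ s a, P s a ∈ stdSimplex ℝ S) (hμ0 : μ0 ∈ stdSimplex ℝ S)
    (hγ : γ ∈ Set.Ico 0 1) (hr : ∀ s a, r s a ∈ Set.Icc 0 1)
    (hdD : Function.uncurry dD ∈ stdSimplex ℝ (S × A)) {ε δ Mf Bw0 Bf0 Bw Bf Bv : ℝ}
    (hε : 0 < ε) (hδ : 0 < δ) {π0 : S → A → ℝ} (hπ0 : IsPolicy π0)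
    (hcov : ∀ s a, occ P μ0 γ π0 s a ≤ Bw0 * dD s a)
    (hBf0 : ∀ x, 0 ≤ x → x ≤ Bw0 → f x ≤ Bf0) (hBf0_pos : 0 < Bf0) (hMf : 0 < Mf)
    (hf : StrongConvexOn (Set.Ici 0) Mf f) (hf_nonneg : ∀ x, 0 ≤ x → 0 ≤ f x)
    (hBf : ∀ x, 0 ≤ x → x ≤ Bw → |f x| ≤ Bf)
    (hsaddle : IsSaddle P r μ0 γ dD f (ε / (2 * Bf0)) vst wst) (hvst : vst ∈ V) (hwst : wst ∈ W)
    (hW : ∀ w ∈ W, ∀ s a, 0 ≤ w s a ∧ w s a ≤ Bw) (hV : ∀ v ∈ V, ∀ s, |v s| ≤ Bv)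
    (hn : 0 < n) (hn0 : 0 < n0)
    (hsize : 131072 * (ε * Bf + 2 * Bw * ((1 + γ) * Bv + 1) * Bf0) ^ 2
      / (ε ^ 6 * Mf ^ 2 * (1 - γ) ^ 4) * Real.log (4 * V.card * W.card / δ) ≤ n)
    (hsize0 : 131072 * (2 * Bv * Bf0) ^ 2 / (ε ^ 6 * Mf ^ 2 * (1 - γ) ^ 2)
      * Real.log (4 * V.card / δ) ≤ n0)
    {vhat : (Fin n → (S × A) × S) × (Fin n0 → S) → S → ℝ}
    {what : (Fin n → (S × A) × S) × (Fin n0 → S) → S → A → ℝ}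
    (hout : ∀ ω, IsProRLOutput r γ f (ε / (2 * Bf0)) V W ω.1 ω.2 (vhat ω) (what ω)) :
    1 - ENNReal.ofReal δ ≤ dataMeasure P dD μ0 n n0 {ω | Jret P r μ0 γ π0
      - Jret P r μ0 γ (extractPolicy (behPolicy dD) (what ω)) ≤ ε} := by
  have hα : 0 < ε / (2 * Bf0) := by positivity
  refine (one_sub_ofReal_le_dataMeasure_forall_le_epsStat hP hμ0 hγ hr hdD hn hn0 hα.le hBf hW hV
    hδ).trans (measure_mono fun ω hω => ?_)
  have hepsStat := epsStat_le_of_sampleSize hγ.2 hε hMf hBf0_pos hn hn0 hsize hsize0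
  calc _ ≤ _ := (hout ω).Jret_sub_le hP hμ0 hγ hr hdD hα hMf hf hf_nonneg hπ0 hcov hBf0 hsaddle
          hvst hwst (fun w hw s a => (hW w hw s a).1)
          fun v hv w hw => (hω v hv w hw).trans hepsStat
    _ = ε := regret_bound_eq hγ.2 hε hMf hBf0_pos

end SampleComplexity

namespace MDPAssumptions

variable {P : S → A → S → ℝ} {r : S → A → ℝ} {μ0 : S → ℝ} {γ : ℝ} {dD : S → A → ℝ}

lemma P_mem_stdSimplex (h : MDPAssumptions P r μ0 γ dD) (s : S) (a : A) :
    P s a ∈ stdSimplex ℝ S :=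
  ⟨h.P_nonneg s a, h.P_sum s a⟩

lemma μ0_mem_stdSimplex (h : MDPAssumptions P r μ0 γ dD) : μ0 ∈ stdSimplex ℝ S :=
  ⟨fun s => (h.μ0_pos s).le, h.μ0_sum⟩

lemma γ_mem_Ico (h : MDPAssumptions P r μ0 γ dD) : γ ∈ Set.Ico 0 1 := ⟨h.γ_nonneg, h.γ_lt_one⟩

lemma r_mem_Icc (h : MDPAssumptions P r μ0 γ dD) (s : S) (a : A) : r s a ∈ Set.Icc 0 1 :=
  ⟨h.r_nonneg s a, h.r_le_one s a⟩

lemma uncurry_dD_mem_stdSimplex (h : MDPAssumptions P r μ0 γ dD) :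
    Function.uncurry dD ∈ stdSimplex ℝ (S × A) :=
  ⟨fun x => h.dD_nonneg x.1 x.2, (Fintype.sum_prod_type' dD).trans h.dD_sum⟩

end MDPAssumptions

/-- Corollary 1: sample complexity of competing with `π*₀`. -/
theorem stmt1 :
    ∃ C1 : ℝ, 0 < C1 ∧
    ∀ (S A : Type) [Fintype S] [Fintype A] [Nonempty S] [Nonempty A]
      [MeasurableSpace S] [MeasurableSpace A]
      [MeasurableSingletonClass S] [MeasurableSingletonClass A]
      (P : S → A → S → ℝ) (r : S → A → ℝ) (μ0 : S → ℝ) (γ : ℝ) (dD : S → A → ℝ),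
      MDPAssumptions P r μ0 γ dD →
      ∀ (f f' : ℝ → ℝ) (ε δ : ℝ), 0 < ε → 0 < δ → δ < 1 →
      ∀ (Mf Bw0 Bf0 Bwα Bf'α Bfα Bvα Beα : ℝ) (π0 : S → A → ℝ),
      -- π*₀ is an optimal policy whose occupancy d*₀ is covered by the data
      IsPolicy π0 →
      (∀ π : S → A → ℝ, IsPolicy π → Jret P r μ0 γ π ≤ Jret P r μ0 γ π0) →
      (∀ s a, occ P μ0 γ π0 s a ≤ Bw0 * dD s a) →
      -- B_{f,0} bounds |f| on [0, B_{w,0}]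
      (∀ x, 0 ≤ x → x ≤ Bw0 → |f x| ≤ Bf0) → 0 < Bf0 →
      -- (A5) at α = α_ε := ε/(2 B_{f,0})
      RegAssumptions f f' Mf Bwα Bf'α Bfα → (∀ x, 0 ≤ f x) →
      Bvα = (ε / (2 * Bf0) * Bf'α + 1) / (1 - γ) → Beα = (1 + γ) * Bvα + 1 →
      ∀ (vst : S → ℝ) (wst : S → A → ℝ),
        IsSaddle P r μ0 γ dD f (ε / (2 * Bf0)) vst wst →
      ∀ (V : Finset (S → ℝ)) (W : Finset (S → A → ℝ)),
        -- (A1)–(A4), (A6) at α = α_ε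
        (∀ s a, dstar dD wst s a ≤ Bwα * dD s a) →
        vst ∈ V → wst ∈ W →
        (∀ w ∈ W, ∀ s a, 0 ≤ w s a ∧ w s a ≤ Bwα) →
        (∀ v ∈ V, ∀ s, |v s| ≤ Bvα) →
      ∀ (n n0 : ℕ), 0 < n → 0 < n0 →
        C1 * (ε * Bfα + 2 * Bwα * Beα * Bf0) ^ 2 / (ε ^ 6 * Mf ^ 2 * (1 - γ) ^ 4)
            * Real.log (4 * (V.card : ℝ) * (W.card : ℝ) / δ) ≤ (n : ℝ) →
        C1 * (2 * Bvα * Bf0) ^ 2 / (ε ^ 6 * Mf ^ 2 * (1 - γ) ^ 2)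
            * Real.log (4 * (V.card : ℝ) / δ) ≤ (n0 : ℝ) →
      ∀ (vhat : (Fin n → (S × A) × S) × (Fin n0 → S) → S → ℝ)
        (what : (Fin n → (S × A) × S) × (Fin n0 → S) → S → A → ℝ),
        (∀ ω, IsProRLOutput r γ f (ε / (2 * Bf0)) V W ω.1 ω.2 (vhat ω) (what ω)) →
        1 - ENNReal.ofReal δ ≤
          dataMeasure P dD μ0 n n0 {ω |
            Jret P r μ0 γ π0
              - Jret P r μ0 γ (extractPolicy (behPolicy dD) (what ω)) ≤ ε } := by
  refine ⟨131072, by norm_num, ?_⟩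
  intro S A _ _ _ _ _ _ _ _ P r μ0 γ dD hM f f' ε δ hε hδ _ Mf Bw0 Bf0 Bwα Bf'α Bfα Bvα Beα π0 hπ0
    _ hcov hBf0 hBf0_pos hf hf_nonneg _ hBeα vst wst hsaddle V W _ hvst hwst hW hV n n0 hn hn0
    hsize hsize0 vhat what hout
  subst hBeα
  exact stmt1_general hM.P_mem_stdSimplex hM.μ0_mem_stdSimplex hM.γ_mem_Ico hM.r_mem_Icc
    hM.uncurry_dD_mem_stdSimplex hε hδ hπ0 hcov (fun x h0 h1 => (abs_le.mp (hBf0 x h0 h1)).2)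
    hBf0_pos hf.Mf_pos ⟨convex_Ici 0, fun x _ y _ => hf.strong.2 (Set.mem_univ x) (Set.mem_univ y)⟩
    (fun x _ => hf_nonneg x) hf.f_bdd hsaddle hvst hwst hW hV hn hn0 hsize hsize0 hout

end ProRL
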